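/- Let d ≥ 2, ε > 0, and U ⊂ ℝ^d a compact convex body of dimension d with ℤ^d ∩ int(εU) = {0}. Then there exists a surjective homomorphism φ : ℤ^d → ℤ such that the interval φ(U) has length at most d(d+1)/ε. -/

import Mathlib

open Pointwise

/-- The canonical ℝ-linear extension of a ℤ-linear functional on `ℤ^d` to `ℝ^d`. -/
noncomputable def extR {d : ℕ} (φ : (Fin d → ℤ) →ₗ[ℤ] ℤ) (x : Fin d → ℝ) : ℝ :=
  ∑ i, x i * (φ (Pi.single i 1) : ℝ)

/-- The inclusion of the lattice `ℤ^d` into `ℝ^d`. -/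
def intCast {d : ℕ} (e : Fin d → ℤ) : Fin d → ℝ := fun i => (e i : ℝ)

/-! Let `K` be a convex body in `ℝ^d` with at most one lattice point in its interior, and let
`c + A B` be an ellipsoid of maximal volume in `K`, where `B` is the unit ball; then
`K ⊆ c + d A B` (John). Every lattice point `n`, except at most one, satisfies `‖A⁻¹ (n - c)‖ ≥ 1`.

Suppose that all nonzero vectors of the lattice `Aᵀ ℤ^d` are longer than `2ρ`. Then the translates
of the ball of radius `ρ` by this lattice are disjoint, so Parseval's identity holds, up to a
constant, for functions on that ball and the frequencies `A⁻¹ (n - c)`. If `h` is such a function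
whose Fourier transform vanishes at the exceptional frequency, applying this to `h` and to its
gradient gives `4π² ∫ h² ≤ ∫ ‖∇ h‖²`. For a unit vector `v` orthogonal to the exceptional frequency,
the function `h s = ⟪v, s⟫ (ρ² - ‖s‖²)₊²` is odd under reflection in `v^⊥`, so it qualifies, and its
Rayleigh quotient is `(d + 2) (d + 10) / (3ρ²)`. For `ρ = (d + 1) / 4` this is less than `4π²`.

Hence `‖Aᵀ y‖ ≤ (d + 1) / 2` for some nonzero `y ∈ ℤ^d`, and since `K ⊆ c + d A B` the functional
`⟪y, ·⟫` varies by at most `d (d + 1)` on `K`. Dividing `y` by its content makes it surjective. -/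

section Periodization

open MeasureTheory Set UnitAddTorus

variable {ι : Type*}

/-- The half-open unit cube `(0, 1]^ι`, the fundamental domain of `ℤ^ι` in `ℝ^ι` that Mathlib uses
to integrate over `UnitAddTorus ι`. -/
def unitCube (ι : Type*) : Set (ι → ℝ) := {t | ∀ i, t i ∈ Ioc 0 1}

/-- The projection `ℝ^ι → (ℝ / ℤ)^ι`. -/
noncomputable def toTorus (t : ι → ℝ) : UnitAddTorus ι := fun i => (t i : UnitAddCircle)

/-- The index of the translate `y + (0, 1]^ι` of the unit cube that contains a given point. -/
noncomputable def cubeIndex (t : ι → ℝ) : ι → ℤ := fun i => ⌈t i⌉ - 1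

lemma toTorus_add_intCast (t : ι → ℝ) (y : ι → ℤ) : toTorus (t + Int.cast ∘ y) = toTorus t := by
  ext i
  simp [toTorus]

lemma sub_intCast_mem_unitCube_iff {t : ι → ℝ} {y : ι → ℤ} :
    t - Int.cast ∘ y ∈ unitCube ι ↔ y = cubeIndex t := by
  simp only [unitCube, cubeIndex, mem_ofPred_eq, funext_iff, eq_sub_iff_add_eq, eq_comm (b := ⌈_⌉),
    Int.ceil_eq_iff, Pi.sub_apply, Function.comp_apply, mem_Ioc]
  refine forall_congr' fun i => ?_
  push_cast
  constructor <;> rintro ⟨h, h'⟩ <;> constructor <;> linarith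

lemma measurableSet_unitCube [Finite ι] : MeasurableSet (unitCube ι) := by
  simpa [unitCube, Set.pi] using
    MeasurableSet.univ_pi fun _ : ι => measurableSet_Ioc (a := (0 : ℝ)) (b := 1)

lemma finite_cubeIndex_image [Finite ι] {s : Set (ι → ℝ)} (hs : Bornology.IsBounded s) :
    (cubeIndex '' s).Finite := by
  have := Fintype.ofFinite ι
  obtain ⟨M, hM⟩ := hs.exists_norm_le
  refine (Finite.pi' fun _ : ι => finite_Icc (⌈-M⌉ - 1) (⌈M⌉ - 1)).subset ?_
  rintro _ ⟨t, ht, rfl⟩ i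
  have hti : |t i| ≤ M := (norm_le_pi_norm t i).trans (hM t ht)
  exact ⟨sub_le_sub_right (Int.ceil_mono (abs_le.1 hti).1) _,
    sub_le_sub_right (Int.ceil_mono (abs_le.1 hti).2) _⟩

variable [Fintype ι]

lemma integral_eq_setIntegral_unitCube_sum {E : Type*} [NormedAddCommGroup E] [NormedSpace ℝ E]
    {g : (ι → ℝ) → E} (hg : Integrable g) {Y : Finset (ι → ℤ)}
    (hY : ∀ t, g t ≠ 0 → cubeIndex t ∈ Y) :
    ∫ t, g t = ∫ t in unitCube ι, ∑ y ∈ Y, g (t + Int.cast ∘ y) := by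
  set cell : (ι → ℤ) → Set (ι → ℝ) := fun y => (fun t => t - Int.cast ∘ y) ⁻¹' unitCube ι
    with hcell
  have mem_cell {t y} : t ∈ cell y ↔ y = cubeIndex t := sub_intCast_mem_unitCube_iff
  have cell_measurable : ∀ y, MeasurableSet (cell y) := fun y =>
    (measurable_id.sub_const _) measurableSet_unitCube
  have cell_disjoint : Pairwise (Function.onFun Disjoint cell) := fun y y' hne =>
    Set.disjoint_left.2 fun t ht ht' => hne ((mem_cell.1 ht).trans (mem_cell.1 ht').symm)
  have cell_integral : ∀ y, ∫ t in cell y, g t = ∫ t in unitCube ι, g (t + Int.cast ∘ y) := by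
    intro y
    rw [← (measurePreserving_add_right volume (Int.cast ∘ y : ι → ℝ)).setIntegral_preimage_emb
      (measurableEmbedding_addRight _) g, hcell, ← preimage_comp]
    simp [Function.comp_def]
  calc ∫ t, g t = ∫ t in ⋃ y ∈ Y, cell y, g t := by
        refine (setIntegral_eq_integral_of_forall_compl_eq_zero fun t ht => ?_).symm
        by_contra hne
        exact ht (mem_iUnion₂.2 ⟨_, hY t hne, mem_cell.2 rfl⟩)
    _ = ∑ y ∈ Y, ∫ t in unitCube ι, g (t + Int.cast ∘ y) := by
        rw [integral_biUnion_finset Y (fun y _ => cell_measurable y)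
          (cell_disjoint.set_pairwise _) fun y _ => hg.integrableOn]
        exact Finset.sum_congr rfl fun y _ => cell_integral y
    _ = ∫ t in unitCube ι, ∑ y ∈ Y, g (t + Int.cast ∘ y) :=
        (integral_finsetSum Y fun y _ => (hg.comp_add_right _).integrableOn).symm

/-- The Haar probability measure on `ℝ / ℤ`, the normalization for which Mathlib develops Fourier
series on `UnitAddTorus`, where the corresponding instance is local. -/
noncomputable local instance haarMeasureSpaceUnitAddCircle : MeasureSpace UnitAddCircle :=
  ⟨AddCircle.haarAddCircle⟩

lemma hasSum_sq_mFourierCoeff_of_memLp {f : UnitAddTorus ι → ℂ} (hf : MemLp f 2) :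
    HasSum (fun n => ‖mFourierCoeff f n‖ ^ 2) (∫ z, ‖f z‖ ^ 2) := by
  have coeff_toLp : ∀ n, mFourierCoeff (hf.toLp f) n = mFourierCoeff f n := fun n =>
    integral_congr_ae (hf.coeFn_toLp.mono fun z hz => by simp only [hz])
  have integral_toLp : ∫ z, ‖hf.toLp f z‖ ^ 2 = ∫ z, ‖f z‖ ^ 2 :=
    integral_congr_ae (hf.coeFn_toLp.mono fun z hz => by simp only [hz])
  simpa only [coeff_toLp, integral_toLp] using hasSum_sq_mFourierCoeff (hf.toLp f)

lemma hasSum_sq_setIntegral_unitCube {F : (ι → ℝ) → ℂ} (hF : Continuous F) :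
    HasSum (fun n => ‖∫ t in unitCube ι, mFourier (-n) (toTorus t) * F t‖ ^ 2)
      (∫ t in unitCube ι, ‖F t‖ ^ 2) := by
  have : IsProbabilityMeasure (volume : Measure UnitAddCircle) :=
    inferInstanceAs (IsProbabilityMeasure AddCircle.haarAddCircle)
  have cube_eq : {t : ι → ℝ | ∀ i, t i ∈ Ioc ((0 : ι → ℝ) i) ((0 : ι → ℝ) i + 1)} = unitCube ι := by
    simp [unitCube]
  let Ψ : UnitAddTorus ι → ℂ := fun z => F (measurableEquivPiIoc 0 z)
  have hΨ : ∀ t ∈ unitCube ι, Ψ (toTorus t) = F t := fun t ht => by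
    rw [← cube_eq] at ht
    exact congrArg (fun s => F s.1) ((measurableEquivPiIoc 0).apply_symm_apply ⟨t, ht⟩)
  obtain ⟨C, hC⟩ := (isCompact_Icc (a := (0 : ι → ℝ)) (b := 1)).exists_bound_of_continuousOn
    hF.continuousOn
  have memLp_Ψ : MemLp Ψ 2 := by
    refine MemLp.of_bound (hF.measurable.comp (measurable_subtype_coe.comp
      (measurableEquivPiIoc 0).measurable)).aestronglyMeasurable C (ae_of_all _ fun z => hC _ ?_)
    have hz := (measurableEquivPiIoc 0 z).2
    exact ⟨fun i => (hz i).1.le, fun i => by simpa using (hz i).2⟩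
  have integral_Ψ : ∫ z, ‖Ψ z‖ ^ 2 = ∫ t in unitCube ι, ‖F t‖ ^ 2 := by
    rw [integral_preimage _ 0, cube_eq]
    exact setIntegral_congr_fun measurableSet_unitCube fun t ht =>
      congrArg (‖·‖ ^ 2) (hΨ t ht)
  have coeff_Ψ : ∀ n, mFourierCoeff Ψ n = ∫ t in unitCube ι, mFourier (-n) (toTorus t) * F t := by
    intro n
    rw [mFourierCoeff_eq_integral _ _ 0, cube_eq]
    exact setIntegral_congr_fun measurableSet_unitCube fun t ht =>
      congrArg (mFourier (-n) (toTorus t) * ·) (hΨ t ht)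
  simpa only [integral_Ψ, coeff_Ψ] using hasSum_sq_mFourierCoeff_of_memLp memLp_Ψ

lemma norm_sum_sq_of_forall_ne_eq_zero {κ E : Type*} [NormedAddCommGroup E] {a : κ → E} {k₀ : κ}
    (ha : ∀ k ≠ k₀, a k = 0) (s : Finset κ) : ‖∑ k ∈ s, a k‖ ^ 2 = ∑ k ∈ s, ‖a k‖ ^ 2 := by
  by_cases hk₀ : k₀ ∈ s
  · rw [Finset.sum_eq_single_of_mem k₀ hk₀ fun k _ hk => ha k hk,
      Finset.sum_eq_single_of_mem k₀ hk₀ fun k _ hk => by simp [ha k hk]]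
  · have ha' : ∀ k ∈ s, a k = 0 := fun k hk => ha k (ne_of_mem_of_not_mem hk hk₀)
    rw [Finset.sum_eq_zero ha', Finset.sum_eq_zero fun k hk => by simp [ha' k hk]]
    simp

theorem hasSum_sq_integral_mFourier {f : (ι → ℝ) → ℂ} (hf : Continuous f)
    (hc : HasCompactSupport f)
    (hdisj : ∀ t, ∀ y : ι → ℤ, y ≠ 0 → f t ≠ 0 → f (t + Int.cast ∘ y) = 0) :
    HasSum (fun n => ‖∫ t, mFourier (-n) (toTorus t) * f t‖ ^ 2) (∫ t, ‖f t‖ ^ 2) := by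
  obtain ⟨Y, hY⟩ : ∃ Y : Finset (ι → ℤ), ∀ t, f t ≠ 0 → cubeIndex t ∈ Y :=
    ⟨(finite_cubeIndex_image hc.isCompact.isBounded).toFinset, fun t ht =>
      (Finite.mem_toFinset _).2 (mem_image_of_mem _ (subset_tsupport f ht))⟩
  have hF : Continuous fun t => ∑ y ∈ Y, f (t + Int.cast ∘ y) := by fun_prop
  have integral_sq : ∫ t in unitCube ι, ‖∑ y ∈ Y, f (t + Int.cast ∘ y)‖ ^ 2 = ∫ t, ‖f t‖ ^ 2 := by
    rw [integral_eq_setIntegral_unitCube_sum _ fun t ht => hY t (by simpa using ht)]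
    · refine congrArg _ (funext fun t => ?_)
      obtain ⟨y₀, hy₀⟩ : ∃ y₀ : ι → ℤ, ∀ y ≠ y₀, f (t + Int.cast ∘ y) = 0 := by
        by_contra! hne
        obtain ⟨y₀, -, hy₀⟩ := hne 0
        obtain ⟨y, hy, hy'⟩ := hne y₀
        refine hy' ?_
        convert hdisj _ (y - y₀) (sub_ne_zero.2 hy) hy₀ using 2
        ext i
        simp
      exact norm_sum_sq_of_forall_ne_eq_zero hy₀ Y
    · exact (by fun_prop : Continuous fun t => ‖f t‖ ^ 2).integrable_of_hasCompactSupport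
        (hc.comp_left (g := (‖·‖ ^ 2)) (by simp))
  have integral_coeff : ∀ n, ∫ t in unitCube ι,
      mFourier (-n) (toTorus t) * ∑ y ∈ Y, f (t + Int.cast ∘ y) =
        ∫ t, mFourier (-n) (toTorus t) * f t := by
    intro n
    rw [integral_eq_setIntegral_unitCube_sum (Y := Y) _ fun t ht => hY t (right_ne_zero_of_mul ht)]
    · simp only [toTorus_add_intCast, Finset.mul_sum]
    · refine Continuous.integrable_of_hasCompactSupport ?_ hc.mul_left
      unfold toTorus
      fun_prop
  simpa only [integral_sq, integral_coeff] using hasSum_sq_setIntegral_unitCube hF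

end Periodization

section Frames

open MeasureTheory Complex InnerProductSpace
open scoped FourierTransform RealInnerProductSpace Gradient

variable {V : Type*} [NormedAddCommGroup V] [InnerProductSpace ℝ V] [FiniteDimensional ℝ V]

lemma fderiv_ofReal_apply_eq_inner_gradient {f : V → ℝ} {s : V} (hf : DifferentiableAt ℝ f s)
    (v : V) : fderiv ℝ (fun s => (f s : ℂ)) s v = (⟪∇ f s, v⟫ : ℝ) := by
  rw [inner_gradient_left]
  exact congrArg (· v) (ofRealCLM.hasFDerivAt.comp s hf.hasFDerivAt).fderiv

variable [MeasurableSpace V] [BorelSpace V]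

lemma norm_fourier_fderiv_apply_sq {f : V → ℂ} (hf : Integrable f) (hf' : Differentiable ℝ f)
    (hfd : Integrable (fderiv ℝ f)) (v w : V) :
    ‖𝓕 (fun s => fderiv ℝ f s v) w‖ ^ 2 = 4 * Real.pi ^ 2 * ‖𝓕 f w‖ ^ 2 * ⟪w, v⟫ ^ 2 := by
  rw [← Real.fourier_continuousLinearMap_apply hfd, Real.fourier_fderiv hf hf' hfd,
    VectorFourier.fourierSMulRight_apply]
  simp [mul_pow, abs_of_pos Real.pi_pos, innerSL_apply_apply ℝ]
  ring

lemma sum_norm_fourier_fderiv_apply_sq {f : V → ℂ} (hf : Integrable f)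
    (hf' : Differentiable ℝ f) (hfd : Integrable (fderiv ℝ f)) {J : Type*} [Fintype J]
    (b : OrthonormalBasis J ℝ V) (w : V) :
    ∑ j, ‖𝓕 (fun s => fderiv ℝ f s (b j)) w‖ ^ 2 =
      4 * Real.pi ^ 2 * (‖w‖ ^ 2 * ‖𝓕 f w‖ ^ 2) := by
  simp only [norm_fourier_fderiv_apply_sq hf hf' hfd, ← Finset.mul_sum, b.sum_sq_inner_left]
  ring

lemma sum_integral_sq_fderiv_ofReal_apply {f : V → ℝ} (hf : ContDiff ℝ 1 f)
    (hc : HasCompactSupport f) {J : Type*} [Fintype J] (b : OrthonormalBasis J ℝ V) :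
    ∑ j, ∫ s, ‖fderiv ℝ (fun s => (f s : ℂ)) s (b j)‖ ^ 2 = ∫ s, ‖∇ f s‖ ^ 2 := by
  have hF : ContDiff ℝ 1 fun s => (f s : ℂ) := ofRealCLM.contDiff.comp hf
  have hF' := hF.continuous_fderiv one_ne_zero
  have hFc : HasCompactSupport fun s => (f s : ℂ) := hc.comp_left ofReal_zero
  rw [← integral_finsetSum]
  · simp only [fderiv_ofReal_apply_eq_inner_gradient (hf.differentiable one_ne_zero _), norm_real,
      Real.norm_eq_abs, sq_abs, b.sum_sq_inner_left]
  · exact fun j _ => Continuous.integrable_of_hasCompactSupport (by fun_prop)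
      ((hFc.fderiv_apply (𝕜 := ℝ) (b j)).comp_left (g := (‖·‖ ^ 2)) (by simp))

lemma fourier_eq_zero_of_comp_eq_neg {f : V → ℂ} (R : V ≃ₗᵢ[ℝ] V) (hf : ∀ s, f (R s) = -f s)
    {w : V} (hw : R w = w) : 𝓕 f w = 0 := by
  have fourier_neg : 𝓕 (fun s => -f s) w = -𝓕 f w := by
    simp only [Real.fourier_eq, smul_neg, integral_neg]
  refine self_eq_neg.1 ?_
  rw [← fourier_neg, ← funext hf]
  conv_lhs => rw [← hw]
  exact (Real.fourier_comp_linearIsometry R f w).symm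

/-- The exponentials of frequencies `ξ k` form a tight frame for functions on the ball of radius
`ρ` about `0`: up to a constant factor, Parseval's identity holds with the Fourier transform sampled
at the `ξ k`. -/
def IsTightExponentialFrame {κ : Type*} (ρ : ℝ) (ξ : κ → V) : Prop :=
  ∃ D > 0, ∀ h : V → ℂ, Continuous h → tsupport h ⊆ Metric.closedBall 0 ρ →
    HasSum (fun k => ‖𝓕 h (ξ k)‖ ^ 2) (D * ∫ s, ‖h s‖ ^ 2)

theorem IsTightExponentialFrame.four_pi_sq_mul_integral_sq_le {κ : Type*} {ρ : ℝ} {ξ : κ → V}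
    (hξ : IsTightExponentialFrame ρ ξ) {f : V → ℝ} (hf : ContDiff ℝ 1 f)
    (hsupp : tsupport f ⊆ Metric.closedBall 0 ρ)
    (hfξ : ∀ k, 1 ≤ ‖ξ k‖ ∨ 𝓕 (fun s => (f s : ℂ)) (ξ k) = 0) :
    4 * Real.pi ^ 2 * ∫ s, f s ^ 2 ≤ ∫ s, ‖∇ f s‖ ^ 2 := by
  obtain ⟨D, hD, parseval⟩ := hξ
  have hfc : HasCompactSupport f :=
    (isCompact_closedBall 0 ρ).of_isClosed_subset (isClosed_tsupport f) hsupp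
  set F : V → ℂ := fun s => f s with hF_def
  have hF : ContDiff ℝ 1 F := ofRealCLM.contDiff.comp hf
  have hF' := hF.continuous_fderiv one_ne_zero
  have hFc : HasCompactSupport F := hfc.comp_left ofReal_zero
  have hF_supp : tsupport F ⊆ Metric.closedBall 0 ρ :=
    (tsupport_comp_subset ofReal_zero f).trans hsupp
  set b := stdOrthonormalBasis ℝ V
  have parseval_F := parseval F hF.continuous hF_supp
  have parseval_fderiv := hasSum_sum (s := Finset.univ) fun j _ =>
    parseval (fun s => fderiv ℝ F s (b j)) (by fun_prop)
      ((tsupport_fderiv_apply_subset ℝ (b j)).trans hF_supp)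
  have sum_integral : ∑ j, ∫ s, ‖fderiv ℝ F s (b j)‖ ^ 2 = ∫ s, ‖∇ f s‖ ^ 2 :=
    sum_integral_sq_fderiv_ofReal_apply hf hfc b
  simp only [← Finset.mul_sum, sum_integral,
    sum_norm_fourier_fderiv_apply_sq (hF.continuous.integrable_of_hasCompactSupport hFc)
      (hF.differentiable one_ne_zero)
      (hF'.integrable_of_hasCompactSupport (hFc.fderiv (𝕜 := ℝ)))] at parseval_fderiv
  have termwise : ∀ k, 4 * Real.pi ^ 2 * ‖𝓕 F (ξ k)‖ ^ 2 ≤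
      4 * Real.pi ^ 2 * (‖ξ k‖ ^ 2 * ‖𝓕 F (ξ k)‖ ^ 2) := by
    intro k
    rcases hfξ k with h | h
    · gcongr
      exact le_mul_of_one_le_left (sq_nonneg _) (one_le_pow₀ h)
    · simp [h]
  have key := hasSum_le termwise (parseval_F.mul_left _) parseval_fderiv
  simp only [hF_def, norm_real, Real.norm_eq_abs, sq_abs] at key
  exact le_of_mul_le_mul_left (by linarith) hD

end Frames

section TestFunction

open MeasureTheory InnerProductSpace Module
open scoped RealInnerProductSpace Gradient FourierTransform

lemma hasDerivAt_max_zero_pow (k : ℕ) (x : ℝ) :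
    HasDerivAt (fun x : ℝ => max x 0 ^ (k + 2)) ((k + 2) * max x 0 ^ (k + 1)) x := by
  refine hasDerivAt_of_hasDerivAt_of_ne' (x := 0) (f := fun x => max x 0 ^ (k + 2))
    (g := fun x => (k + 2) * max x 0 ^ (k + 1)) (fun y hy => ?_) (by fun_prop) (by fun_prop) x
  rcases hy.lt_or_gt with hy | hy
  · refine ((hasDerivAt_const y (0 : ℝ)).congr_of_eventuallyEq ?_).congr_deriv ?_
    · filter_upwards [gt_mem_nhds hy] with z hz
      simp [hz.le]
    · simp [hy.le]
  · refine ((hasDerivAt_pow (k + 2) y).congr_of_eventuallyEq ?_).congr_deriv ?_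
    · filter_upwards [lt_mem_nhds hy] with z hz
      simp [hz.le]
    · simp [hy.le]

variable {V : Type*} [NormedAddCommGroup V]

/-- The truncated paraboloid `(ρ² - ‖s‖²)₊`. -/
def paraboloidCap (ρ : ℝ) (s : V) : ℝ := max (ρ ^ 2 - ‖s‖ ^ 2) 0

lemma paraboloidCap_mul_norm_sq (ρ : ℝ) (s : V) :
    paraboloidCap ρ s * ‖s‖ ^ 2 = paraboloidCap ρ s * (ρ ^ 2 - paraboloidCap ρ s) := by
  rcases max_choice (ρ ^ 2 - ‖s‖ ^ 2) 0 with h | h <;> rw [paraboloidCap, h] <;> ring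

variable [InnerProductSpace ℝ V]

/-- The function `⟪n, s⟫ⁱ (ρ² - ‖s‖²)₊ᵐ`. The test function of the transference argument is the case
`i = 1`, `m = 2`; the other exponents occur in the computation of its Rayleigh quotient. -/
def weightedCap (ρ : ℝ) (n : V) (i m : ℕ) (s : V) : ℝ := ⟪n, s⟫ ^ i * paraboloidCap ρ s ^ m

variable {ρ : ℝ} {n : V} {i k m : ℕ}

lemma hasGradientAt_paraboloidCap_pow (ρ : ℝ) (k : ℕ) (s : V) [CompleteSpace V] :
    HasGradientAt (fun s => paraboloidCap ρ s ^ (k + 2))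
      (-(2 * (k + 2) * paraboloidCap ρ s ^ (k + 1)) • s) s := by
  rw [hasGradientAt_iff_hasFDerivAt]
  have h := (hasDerivAt_max_zero_pow k (ρ ^ 2 - ‖s‖ ^ 2)).comp_hasFDerivAt s
    ((hasStrictFDerivAt_norm_sq s).hasFDerivAt.const_sub (ρ ^ 2))
  refine h.congr_fderiv ?_
  ext v
  simp [paraboloidCap]
  ring

lemma hasFDerivAt_weightedCap (ρ : ℝ) (n : V) (i k : ℕ) (s : V) [CompleteSpace V] :
    HasFDerivAt (weightedCap ρ n i (k + 2))
      ((i * ⟪n, s⟫ ^ (i - 1) * paraboloidCap ρ s ^ (k + 2)) • innerSL ℝ n -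
        (2 * (k + 2) * weightedCap ρ n i (k + 1) s) • innerSL ℝ s) s := by
  have h := ((innerSL ℝ n).hasFDerivAt.pow i).mul
    (hasGradientAt_paraboloidCap_pow ρ k s).hasFDerivAt
  refine h.congr_fderiv ?_
  ext v
  simp [weightedCap]
  ring

lemma continuous_weightedCap : Continuous (weightedCap ρ n i m) := by
  unfold weightedCap paraboloidCap
  fun_prop

lemma contDiff_weightedCap [CompleteSpace V] : ContDiff ℝ 1 (weightedCap ρ n i (k + 2)) := by
  refine contDiff_one_iff_hasFDerivAt.2 ⟨_, ?_, fun s => hasFDerivAt_weightedCap ρ n i k s⟩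
  have := continuous_weightedCap (ρ := ρ) (n := n) (i := i) (m := k + 1)
  unfold paraboloidCap
  fun_prop

lemma fderiv_weightedCap_apply [CompleteSpace V] (s v : V) :
    fderiv ℝ (weightedCap ρ n i (k + 2)) s v =
      i * ⟪n, s⟫ ^ (i - 1) * paraboloidCap ρ s ^ (k + 2) * ⟪n, v⟫ -
        2 * (k + 2) * weightedCap ρ n i (k + 1) s * ⟪s, v⟫ := by
  simp [(hasFDerivAt_weightedCap ρ n i k s).fderiv]

lemma gradient_weightedCap_one_two [CompleteSpace V] (s : V) : ∇ (weightedCap ρ n 1 2) s =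
    paraboloidCap ρ s ^ 2 • n - (4 * weightedCap ρ n 1 1 s) • s := by
  refine ext_inner_right ℝ fun v => ?_
  rw [inner_gradient_left, fderiv_weightedCap_apply, inner_sub_left, real_inner_smul_left,
    real_inner_smul_left]
  push_cast
  ring

lemma norm_gradient_weightedCap_one_two_sq (hn : ‖n‖ = 1) [CompleteSpace V] (s : V) :
    ‖∇ (weightedCap ρ n 1 2) s‖ ^ 2 = weightedCap ρ n 0 4 s -
      24 * weightedCap ρ n 2 3 s + 16 * ρ ^ 2 * weightedCap ρ n 2 2 s := by
  rw [gradient_weightedCap_one_two, norm_sub_sq_real, norm_smul, norm_smul, mul_pow, mul_pow, hn,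
    real_inner_smul_left, real_inner_smul_right, Real.norm_eq_abs, Real.norm_eq_abs, sq_abs, sq_abs]
  simp only [weightedCap]
  linear_combination 16 * ⟪n, s⟫ ^ 2 * paraboloidCap ρ s * paraboloidCap_mul_norm_sq ρ s

lemma tsupport_weightedCap_subset (hρ : 0 ≤ ρ) :
    tsupport (weightedCap ρ n i (m + 1)) ⊆ Metric.closedBall 0 ρ := by
  refine closure_minimal (fun s hs => ?_) Metric.isClosed_closedBall
  contrapose! hs
  have hs : ρ < ‖s‖ := by simpa using hs
  have : paraboloidCap ρ s = 0 := max_eq_right (by nlinarith)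
  simp [weightedCap, this]

lemma hasCompactSupport_weightedCap [FiniteDimensional ℝ V] (hρ : 0 ≤ ρ) :
    HasCompactSupport (weightedCap ρ n i (m + 1)) :=
  (isCompact_closedBall 0 ρ).of_isClosed_subset (isClosed_tsupport _)
    (tsupport_weightedCap_subset hρ)

lemma weightedCap_one_pos {s : V} (hn : 0 < ⟪n, s⟫) (hs : ‖s‖ < ρ) : 0 < weightedCap ρ n 1 m s :=
  mul_pos (pow_pos hn 1) (pow_pos (lt_max_of_lt_left (by nlinarith [norm_nonneg s])) m)

variable [FiniteDimensional ℝ V]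

lemma exists_norm_eq_one_inner_eq_zero (hV : 1 < finrank ℝ V) (w : V) :
    ∃ n : V, ‖n‖ = 1 ∧ ⟪n, w⟫ = 0 := by
  have : 0 < finrank ℝ (ℝ ∙ w)ᗮ := by
    have := Submodule.finrank_add_finrank_orthogonal (ℝ ∙ w)
    have : finrank ℝ (ℝ ∙ w) ≤ 1 := (finrank_span_le_card {w}).trans_eq (by simp)
    omega
  have := nontrivial_of_finrank_pos this
  obtain ⟨n, hn⟩ := exists_norm_eq (ℝ ∙ w)ᗮ zero_le_one
  exact ⟨n, hn, Submodule.mem_orthogonal_singleton_iff_inner_left.1 n.2⟩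

variable [MeasurableSpace V] [BorelSpace V]

lemma integrable_weightedCap (hρ : 0 ≤ ρ) : Integrable (weightedCap ρ n i (m + 1)) :=
  continuous_weightedCap.integrable_of_hasCompactSupport (hasCompactSupport_weightedCap hρ)

lemma integral_mul_fderiv_apply_of_hasCompactSupport {f g : V → ℝ} (hf : ContDiff ℝ 1 f)
    (hc : HasCompactSupport f) (hg : ContDiff ℝ 1 g) (v : V) :
    ∫ s, g s * fderiv ℝ f s v = -∫ s, fderiv ℝ g s v * f s := by
  have := hf.continuous_fderiv one_ne_zero
  have := hg.continuous_fderiv one_ne_zero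
  have := hf.continuous
  have := hg.continuous
  exact integral_mul_fderiv_eq_neg_fderiv_mul_of_integrable
    ((by fun_prop : Continuous _).integrable_of_hasCompactSupport hc.mul_left)
    ((by fun_prop : Continuous _).integrable_of_hasCompactSupport
      (hc.fderiv_apply (𝕜 := ℝ) v).mul_left)
    ((by fun_prop : Continuous _).integrable_of_hasCompactSupport hc.mul_left)
    (fun s _ => hg.differentiable one_ne_zero s) (fun s _ => hf.differentiable one_ne_zero s)

lemma integral_fderiv_apply_eq_zero {f : V → ℝ} (hf : ContDiff ℝ 1 f) (hc : HasCompactSupport f)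
    (v : V) : ∫ s, fderiv ℝ f s v = 0 := by
  simpa using integral_mul_fderiv_apply_of_hasCompactSupport hf hc (contDiff_const (c := 1)) v

lemma integral_fderiv_apply_self {f : V → ℝ} (hf : ContDiff ℝ 1 f) (hc : HasCompactSupport f) :
    ∫ s, fderiv ℝ f s s = -(finrank ℝ V * ∫ s, f s) := by
  have := hf.continuous_fderiv one_ne_zero
  set b := stdOrthonormalBasis ℝ V
  have fderiv_expand : ∀ s, fderiv ℝ f s s = ∑ j, ⟪b j, s⟫ * fderiv ℝ f s (b j) := fun s => by
    calc fderiv ℝ f s s = fderiv ℝ f s (∑ j, ⟪b j, s⟫ • b j) := by rw [b.sum_repr']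
      _ = ∑ j, ⟪b j, s⟫ * fderiv ℝ f s (b j) := by simp only [map_sum, map_smul, smul_eq_mul]
  have by_parts : ∀ j, ∫ s, ⟪b j, s⟫ * fderiv ℝ f s (b j) = -∫ s, f s := fun j => by
    have h := integral_mul_fderiv_apply_of_hasCompactSupport hf hc (innerSL ℝ (b j)).contDiff (b j)
    simpa only [ContinuousLinearMap.fderiv, innerSL_apply_apply, real_inner_self_eq_norm_sq,
      b.norm_eq_one, one_pow, one_mul] using h
  simp only [fderiv_expand]
  rw [integral_finsetSum]
  · simp [by_parts]
  · exact fun j _ => Continuous.integrable_of_hasCompactSupport (by fun_prop)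
      (hc.fderiv_apply (𝕜 := ℝ) (b j)).mul_left

lemma integral_weightedCap_succ (hρ : 0 ≤ ρ) (n : V) (i k : ℕ) :
    (finrank ℝ V + i + 2 * (k + 2)) * ∫ s, weightedCap ρ n i (k + 2) s =
      2 * (k + 2) * ρ ^ 2 * ∫ s, weightedCap ρ n i (k + 1) s := by
  have fderiv_self : ∀ s : V, fderiv ℝ (weightedCap ρ n i (k + 2)) s s =
      (i + 2 * (k + 2)) * weightedCap ρ n i (k + 2) s -
        2 * (k + 2) * ρ ^ 2 * weightedCap ρ n i (k + 1) s := fun s => by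
    have inner_pow : (i : ℝ) * ⟪n, s⟫ ^ (i - 1) * ⟪n, s⟫ = i * ⟪n, s⟫ ^ i := by
      cases i <;> simp [pow_succ, mul_assoc]
    rw [fderiv_weightedCap_apply, real_inner_self_eq_norm_sq]
    simp only [weightedCap]
    linear_combination paraboloidCap ρ s ^ (k + 2) * inner_pow -
      2 * (k + 2) * ⟪n, s⟫ ^ i * paraboloidCap ρ s ^ k * paraboloidCap_mul_norm_sq ρ s
  have euler := integral_fderiv_apply_self
    (contDiff_weightedCap (ρ := ρ) (n := n) (i := i) (k := k)) (hasCompactSupport_weightedCap hρ)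
  simp only [fderiv_self] at euler
  rw [integral_sub ((integrable_weightedCap hρ).const_mul _)
    ((integrable_weightedCap hρ).const_mul _), integral_const_mul, integral_const_mul] at euler
  linarith

lemma integral_weightedCap_zero_four (hρ : 0 ≤ ρ) (hn : ‖n‖ = 1) :
    ∫ s, weightedCap ρ n 0 4 s = 8 * ∫ s, weightedCap ρ n 2 3 s := by
  have h := integral_fderiv_apply_eq_zero (contDiff_weightedCap (ρ := ρ) (n := n) (i := 1) (k := 2))
    (hasCompactSupport_weightedCap hρ) n
  have fderiv_n : ∀ s : V, fderiv ℝ (weightedCap ρ n 1 4) s n =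
      weightedCap ρ n 0 4 s - 8 * weightedCap ρ n 2 3 s := fun s => by
    rw [fderiv_weightedCap_apply, real_inner_self_eq_norm_sq, hn,
      real_inner_comm n s]
    simp only [weightedCap]
    push_cast
    ring
  simp only [fderiv_n] at h
  rwa [integral_sub (integrable_weightedCap hρ) ((integrable_weightedCap hρ).const_mul _),
    integral_const_mul, sub_eq_zero] at h

theorem integral_norm_gradient_weightedCap_sq (hρ : 0 ≤ ρ) (hn : ‖n‖ = 1) :
    3 * ρ ^ 2 * ∫ s, ‖∇ (weightedCap ρ n 1 2) s‖ ^ 2 =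
      (finrank ℝ V + 2) * (finrank ℝ V + 10) * ∫ s, weightedCap ρ n 1 2 s ^ 2 := by
  have weightedCap_sq : ∀ s : V, weightedCap ρ n 1 2 s ^ 2 = weightedCap ρ n 2 4 s := fun s => by
    simp only [weightedCap]
    ring
  have h₂₃ : (finrank ℝ V + 8) * ∫ s, weightedCap ρ n 2 3 s =
      6 * ρ ^ 2 * ∫ s, weightedCap ρ n 2 2 s := by
    linear_combination integral_weightedCap_succ hρ n 2 1
  have h₃₄ : (finrank ℝ V + 10) * ∫ s, weightedCap ρ n 2 4 s =
      8 * ρ ^ 2 * ∫ s, weightedCap ρ n 2 3 s := by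
    linear_combination integral_weightedCap_succ hρ n 2 2
  simp only [norm_gradient_weightedCap_one_two_sq hn, weightedCap_sq]
  rw [integral_add ((integrable_weightedCap hρ).sub' ((integrable_weightedCap hρ).const_mul _))
    ((integrable_weightedCap hρ).const_mul _), integral_sub (integrable_weightedCap hρ)
    ((integrable_weightedCap hρ).const_mul _), integral_const_mul, integral_const_mul,
    integral_weightedCap_zero_four hρ hn]
  linear_combination -8 * ρ ^ 2 * h₂₃ - (finrank ℝ V + 2) * h₃₄

lemma integral_weightedCap_one_sq_pos (hρ : 0 < ρ) (hn : ‖n‖ = 1) :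
    0 < ∫ s, weightedCap ρ n 1 (m + 1) s ^ 2 := by
  refine (continuous_weightedCap.pow 2).integral_pos_of_hasCompactSupport_nonneg_nonzero
    ((hasCompactSupport_weightedCap hρ.le).comp_left (g := (· ^ 2)) (by simp))
    (fun s => sq_nonneg _) (x := (ρ / 2) • n) (pow_pos (weightedCap_one_pos ?_ ?_) 2).ne'
  · rw [real_inner_smul_right, real_inner_self_eq_norm_sq, hn]
    positivity
  · rw [norm_smul, hn, Real.norm_eq_abs, abs_of_pos (by positivity)]
    linarith

lemma fourier_weightedCap_one_eq_zero {w : V} (hw : ⟪n, w⟫ = 0) :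
    𝓕 (fun s => (weightedCap ρ n 1 m s : ℂ)) w = 0 := by
  let R : V ≃ₗᵢ[ℝ] V := (ℝ ∙ n)ᗮ.reflection
  refine fourier_eq_zero_of_comp_eq_neg R (fun s => ?_)
    (Submodule.reflection_mem_subspace_eq_self
      (Submodule.mem_orthogonal_singleton_iff_inner_right.2 hw))
  have inner_reflection : ⟪n, R s⟫ = -⟪n, s⟫ := by
    rw [← R.inner_map_map n (R s), Submodule.reflection_orthogonalComplement_singleton_eq_neg,
      Submodule.reflection_reflection, inner_neg_left]
  simp [weightedCap, paraboloidCap, inner_reflection]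

end TestFunction

section Transference

open MeasureTheory InnerProductSpace Module UnitAddTorus
open scoped RealInnerProductSpace FourierTransform Gradient

section

variable {V : Type*} [NormedAddCommGroup V] [InnerProductSpace ℝ V] [FiniteDimensional ℝ V]

/-- The adjoint of an invertible linear map, as an invertible linear map. -/
noncomputable def adjointEquiv (A : V ≃L[ℝ] V) : V ≃L[ℝ] V :=
  .equivOfInverse (A : V →L[ℝ] V).adjoint (A.symm : V →L[ℝ] V).adjoint
    (fun v => ext_inner_right ℝ fun w => by simp [ContinuousLinearMap.adjoint_inner_left])
    (fun v => ext_inner_right ℝ fun w => by simp [ContinuousLinearMap.adjoint_inner_left])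

lemma inner_adjointEquiv_left (A : V ≃L[ℝ] V) (v w : V) : ⟪adjointEquiv A v, w⟫ = ⟪v, A w⟫ :=
  ContinuousLinearMap.adjoint_inner_left (A : V →L[ℝ] V) w v

variable [MeasurableSpace V] [BorelSpace V]

lemma integral_comp_continuousLinearEquiv {E : Type*} [NormedAddCommGroup E] [NormedSpace ℝ E]
    (T : V ≃L[ℝ] V) (g : V → E) :
    ∫ t, g (T t) = |(LinearMap.det (T : V →ₗ[ℝ] V))⁻¹| • ∫ s, g s := by
  have map_volume := Measure.map_linearMap_addHaar_eq_smul_addHaar (volume : Measure V)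
    (LinearEquiv.isUnit_det' T.toLinearEquiv).ne_zero
  calc ∫ t, g (T t) = ∫ s, g s ∂(Measure.map (T : V →ₗ[ℝ] V) volume) :=
        (T.toHomeomorph.measurableEmbedding.integral_map g).symm
    _ = _ := by rw [map_volume, integral_smul_measure, ENNReal.toReal_ofReal (abs_nonneg _)]

lemma fourier_fourierChar_smul_comp_adjointEquiv (A : V ≃L[ℝ] V) (h : V → ℂ) (c w : V) :
    𝓕 (fun t => 𝐞 ⟪t, c⟫ • h (adjointEquiv A t)) w =
      |(LinearMap.det (adjointEquiv A : V →ₗ[ℝ] V))⁻¹| • 𝓕 h (A.symm (w - c)) := by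
  rw [Real.fourier_eq, Real.fourier_eq, ← integral_comp_continuousLinearEquiv]
  refine congrArg _ (funext fun t => ?_)
  rw [inner_adjointEquiv_left, A.apply_symm_apply, smul_smul, ← AddChar.map_add_eq_mul,
    inner_sub_right]
  ring_nf

theorem IsTightExponentialFrame.twelve_pi_sq_mul_sq_le {κ : Type*} {ρ : ℝ} {ξ : κ → V}
    (hξ : IsTightExponentialFrame ρ ξ) (hρ : 0 < ρ) (hV : 1 < finrank ℝ V) (k₀ : κ)
    (hk₀ : ∀ k ≠ k₀, 1 ≤ ‖ξ k‖) :
    12 * Real.pi ^ 2 * ρ ^ 2 ≤ (finrank ℝ V + 2) * (finrank ℝ V + 10) := by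
  obtain ⟨n, hn, hnk₀⟩ := exists_norm_eq_one_inner_eq_zero hV (ξ k₀)
  have gap := hξ.four_pi_sq_mul_integral_sq_le (f := weightedCap ρ n 1 2) contDiff_weightedCap
    (tsupport_weightedCap_subset hρ.le) fun k => by
      rcases eq_or_ne k k₀ with rfl | hk
      · exact .inr (fourier_weightedCap_one_eq_zero hnk₀)
      · exact .inl (hk₀ k hk)
  have rayleigh := integral_norm_gradient_weightedCap_sq hρ.le hn
  refine le_of_mul_le_mul_right ?_ (integral_weightedCap_one_sq_pos (m := 1) hρ hn)
  rw [← rayleigh]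
  linear_combination 3 * ρ ^ 2 * gap

end

variable {ι : Type*} [Fintype ι]

/-- The lattice point of `EuclideanSpace ℝ ι` with given integer coordinates. -/
noncomputable def latticePoint (e : ι → ℤ) : EuclideanSpace ℝ ι := WithLp.toLp 2 (Int.cast ∘ e)

lemma mFourier_neg_toTorus (n : ι → ℤ) (t : ι → ℝ) :
    mFourier (-n) (toTorus t) = 𝐞 (-⟪WithLp.toLp 2 t, latticePoint n⟫) := by
  simp only [mFourier, toTorus, ContinuousMap.coe_mk, fourier_coe_apply, ← Complex.exp_sum,
    Real.fourierChar_apply, PiLp.inner_apply, latticePoint]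
  congr 1
  push_cast [Finset.mul_sum, Finset.sum_mul, ← Finset.sum_neg_distrib]
  refine Finset.sum_congr rfl fun i _ => ?_
  simp
  ring

lemma hasSum_sq_fourier_latticePoint {f : EuclideanSpace ℝ ι → ℂ} (hf : Continuous f)
    (hc : HasCompactSupport f)
    (hdisj : ∀ t, ∀ y : ι → ℤ, y ≠ 0 → f t ≠ 0 → f (t + latticePoint y) = 0) :
    HasSum (fun n : ι → ℤ => ‖𝓕 f (latticePoint n)‖ ^ 2) (∫ t, ‖f t‖ ^ 2) := by
  have integral_toLp {E : Type} [NormedAddCommGroup E] [NormedSpace ℝ E]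
      (g : EuclideanSpace ℝ ι → E) : ∫ t : ι → ℝ, g (WithLp.toLp 2 t) = ∫ s, g s :=
    (PiLp.volume_preserving_toLp ι).integral_comp
      (MeasurableEquiv.toLp 2 (ι → ℝ)).measurableEmbedding g
  have h := hasSum_sq_integral_mFourier (f := fun t => f (WithLp.toLp 2 t))
    (hf.comp (PiLp.continuous_toLp 2 _))
    (hc.comp_homeomorph (PiLp.homeomorph 2 (fun _ : ι => ℝ)).symm)
    fun t y hy ht => hdisj _ y hy ht
  rw [integral_toLp fun s => ‖f s‖ ^ 2] at h
  convert h using 4 with n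
  rw [Real.fourier_eq, ← integral_toLp]
  simp only [mFourier_neg_toTorus, Circle.smul_def, smul_eq_mul]

theorem isTightExponentialFrame_latticePoint (A : EuclideanSpace ℝ ι ≃L[ℝ] EuclideanSpace ℝ ι)
    (c : EuclideanSpace ℝ ι) {ρ : ℝ}
    (hA : ∀ y : ι → ℤ, y ≠ 0 → 2 * ρ < ‖adjointEquiv A (latticePoint y)‖) :
    IsTightExponentialFrame ρ fun n : ι → ℤ => A.symm (latticePoint n - c) := by
  set δ := |(LinearMap.det (adjointEquiv A : EuclideanSpace ℝ ι →ₗ[ℝ] EuclideanSpace ℝ ι))⁻¹|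
  have hδ : 0 < δ :=
    abs_pos.2 (inv_ne_zero (LinearEquiv.isUnit_det' (adjointEquiv A).toLinearEquiv).ne_zero)
  refine ⟨δ⁻¹, inv_pos.2 hδ, fun h hh hsupp => ?_⟩
  have hh_compact : HasCompactSupport h :=
    (isCompact_closedBall 0 ρ).of_isClosed_subset (isClosed_tsupport h) hsupp
  set f : EuclideanSpace ℝ ι → ℂ := fun t => 𝐞 ⟪t, c⟫ • h (adjointEquiv A t)
  have hf_disj : ∀ t, ∀ y : ι → ℤ, y ≠ 0 → f t ≠ 0 → f (t + latticePoint y) = 0 := by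
    intro t y hy ht
    by_contra ht'
    have norm_le {s} (hs : f s ≠ 0) : ‖adjointEquiv A s‖ ≤ ρ := by
      rw [← mem_closedBall_zero_iff]
      exact hsupp (subset_tsupport h fun h0 => hs (by simp [f, h0]))
    have := norm_sub_le (adjointEquiv A (t + latticePoint y)) (adjointEquiv A t)
    rw [← map_sub, add_sub_cancel_left] at this
    linarith [hA y hy, norm_le ht, norm_le ht']
  have parseval := hasSum_sq_fourier_latticePoint (f := f) (by fun_prop)
    (hh_compact.comp_homeomorph (adjointEquiv A).toHomeomorph).smul_left hf_disj
  have integral_norm_sq : ∫ t, ‖f t‖ ^ 2 = δ * ∫ s, ‖h s‖ ^ 2 := by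
    simp only [f, Circle.norm_smul]
    exact integral_comp_continuousLinearEquiv (adjointEquiv A) (‖h ·‖ ^ 2)
  have norm_fourier_sq : ∀ n : ι → ℤ, ‖𝓕 f (latticePoint n)‖ ^ 2 =
      δ ^ 2 * ‖𝓕 h (A.symm (latticePoint n - c))‖ ^ 2 := fun n => by
    rw [fourier_fourierChar_smul_comp_adjointEquiv, norm_smul, Real.norm_eq_abs, abs_abs, mul_pow]
  simp only [norm_fourier_sq, integral_norm_sq] at parseval
  rwa [← hasSum_mul_left_iff (pow_ne_zero 2 hδ.ne'), ← mul_assoc, pow_two δ,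
    mul_inv_cancel_right₀ hδ.ne', ← pow_two]

theorem exists_norm_adjointEquiv_latticePoint_le (hι : 1 < Fintype.card ι)
    (A : EuclideanSpace ℝ ι ≃L[ℝ] EuclideanSpace ℝ ι) (c : EuclideanSpace ℝ ι) {ρ : ℝ} (hρ : 0 < ρ)
    (hρ' : (Fintype.card ι + 2) * (Fintype.card ι + 10) < 12 * Real.pi ^ 2 * ρ ^ 2)
    {n₀ : ι → ℤ} (hA : ∀ n ≠ n₀, 1 ≤ ‖A.symm (latticePoint n - c)‖) :
    ∃ y : ι → ℤ, y ≠ 0 ∧ ‖adjointEquiv A (latticePoint y)‖ ≤ 2 * ρ := by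
  by_contra! hne
  have := (isTightExponentialFrame_latticePoint A c hne).twelve_pi_sq_mul_sq_le hρ
    (by simpa using hι) n₀ hA
  rw [finrank_euclideanSpace] at this
  linarith

end Transference

section John

open InnerProductSpace Module Metric Set
open scoped Topology RealInnerProductSpace

-- With `N = ‖v‖` and `s = ⟪e, v⟫`, the right side is the support function at `v` of the convex hull
-- of the unit ball and `R • e`, and the left side that of a shifted ellipsoid with axis `e`.
lemma mul_add_le_max_of_sq_eq {R δ N s m : ℝ} (hR : 1 ≤ R) (hδ₀ : 0 ≤ δ) (hδ₁ : δ ≤ 1)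
    (hs : |s| ≤ N)
    (hm : m ^ 2 = (1 - δ) * N ^ 2 + ((1 + δ * (R - 1) / 2) ^ 2 - (1 - δ)) * s ^ 2) :
    δ * (R - 1) / 2 * s + m ≤ max N (R * s) := by
  obtain ⟨hs₁, hs₂⟩ := abs_le.1 hs
  set t := δ * (R - 1) / 2 with ht
  have _ : 0 ≤ t := by nlinarith
  have _ : t ≤ R := by nlinarith
  rcases le_total (R * s) N with h | h
  · have hts : t * s ≤ N := by
      rcases le_total s 0 <;> nlinarith
    have sq_sub : (N - t * s) ^ 2 - m ^ 2 = δ * ((N - R * s) * (N + s)) := by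
      rw [hm, ht]
      ring
    have : 0 ≤ δ * ((N - R * s) * (N + s)) :=
      mul_nonneg hδ₀ (mul_nonneg (by linarith) (by linarith))
    have := le_of_abs_le (abs_le_of_sq_le_sq (a := m) (b := N - t * s) (by linarith) (by linarith))
    linarith [le_max_left N (R * s)]
  · have hs₀ : 0 ≤ s := by nlinarith
    have sq_sub : (R * s - t * s) ^ 2 - m ^ 2 = (1 - δ) * ((R * s) ^ 2 - N ^ 2) := by
      rw [hm, ht]
      ring
    have : 0 ≤ (1 - δ) * ((R * s) ^ 2 - N ^ 2) :=
      mul_nonneg (by linarith) (sub_nonneg.2 (pow_le_pow_left₀ (hs₀.trans hs₂) h 2))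
    have := le_of_abs_le (abs_le_of_sq_le_sq (a := m) (b := R * s - t * s) (by linarith)
      (by nlinarith))
    linarith [le_max_right N (R * s)]

/-- The linear map that multiplies a unit vector `e` by `a` and its orthogonal complement by `b`. -/
noncomputable def stretch {V : Type*} [NormedAddCommGroup V] [InnerProductSpace ℝ V] (a b : ℝ)
    (e : V) : V →L[ℝ] V :=
  b • ContinuousLinearMap.id ℝ V + (a - b) • (innerSL ℝ e).smulRight e

section

variable {V : Type*} [NormedAddCommGroup V] [InnerProductSpace ℝ V]

lemma stretch_apply (a b : ℝ) (e u : V) :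
    stretch a b e u = b • u + ((a - b) * ⟪e, u⟫) • e := by
  simp [stretch, smul_smul]

lemma inner_stretch_right (a b : ℝ) (e v w : V) :
    ⟪v, stretch a b e w⟫ = ⟪stretch a b e v, w⟫ := by
  simp only [stretch_apply, inner_add_left, inner_add_right, real_inner_smul_left,
    real_inner_smul_right, real_inner_comm e v]
  ring

lemma norm_stretch_sq (a b : ℝ) {e : V} (he : ‖e‖ = 1) (v : V) :
    ‖stretch a b e v‖ ^ 2 = b ^ 2 * ‖v‖ ^ 2 + (a ^ 2 - b ^ 2) * ⟪e, v⟫ ^ 2 := by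
  rw [stretch_apply, norm_add_sq_real, norm_smul, norm_smul, real_inner_smul_left,
    real_inner_smul_right, he, real_inner_comm e v]
  simp only [Real.norm_eq_abs, mul_pow, sq_abs]
  ring

lemma det_stretch [FiniteDimensional ℝ V] (a : ℝ) {b : ℝ} (hb : b ≠ 0) {e : V} (he : ‖e‖ = 1) :
    (stretch a b e).det = b ^ finrank ℝ V * (a / b) := by
  have stretch_eq : (stretch a b e : V →ₗ[ℝ] V) =
      b • LinearMap.transvection (((a - b) / b) • (innerSL ℝ e : V →ₗ[ℝ] ℝ)) e := by
    ext u
    have : b * ((a - b) / b * ⟪e, u⟫) = (a - b) * ⟪e, u⟫ := by field_simp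
    simp [stretch_apply, LinearMap.transvection.apply, smul_smul, this]
  rw [ContinuousLinearMap.det, stretch_eq, LinearMap.det_smul, LinearMap.transvection.det]
  congr 1
  simp [he]
  field_simp
  ring

end

lemma exists_one_lt_one_sub_pow_mul_sq {R : ℝ} {k : ℕ} (hR : k + 1 < R) :
    ∃ δ > 0, δ < 1 ∧ 1 < (1 - δ) ^ k * (1 + δ * (R - 1) / 2) ^ 2 := by
  let p : ℝ → ℝ := fun δ => (1 - δ) ^ k * (1 + δ * (R - 1) / 2) ^ 2
  have hp : HasDerivAt p (R - (k + 1)) 0 := by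
    have := (((hasDerivAt_id (0 : ℝ)).const_sub 1).pow k).mul
      (((((hasDerivAt_id (0 : ℝ)).mul_const (R - 1)).div_const 2).const_add 1).pow 2)
    refine this.congr_deriv ?_
    simp
    ring
  have hlt : ∀ᶠ δ in 𝓝[>] 0, p 0 < p δ := by
    have := (hasDerivWithinAt_iff_tendsto_slope' (s := Ioi 0) (by simp)).1 hp.hasDerivWithinAt
    filter_upwards [this.eventually_const_lt (sub_pos.2 hR), self_mem_nhdsWithin] with δ hδ hδ₀
    exact (slope_pos_iff hδ₀).1 hδ
  obtain ⟨δ, hδ, hδ₀, hδ₁⟩ := (hlt.and (Ioo_mem_nhdsGT one_pos)).exists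
  exact ⟨δ, hδ₀, hδ₁, by simpa [p] using hδ⟩

variable {V : Type*} [NormedAddCommGroup V] [InnerProductSpace ℝ V] {K : Set V}

/-- The pairs `(A, c)` such that the (possibly degenerate) ellipsoid `c + A B` is contained in `K`,
where `B` is the closed unit ball. -/
def inscribedEllipsoids (K : Set V) : Set ((V →L[ℝ] V) × V) :=
  {P | ∀ u, ‖u‖ ≤ 1 → P.2 + P.1 u ∈ K}

lemma isClosed_inscribedEllipsoids (hKc : IsClosed K) : IsClosed (inscribedEllipsoids K) := by
  simp only [inscribedEllipsoids, ofPred_forall]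
  exact isClosed_iInter fun u => isClosed_iInter fun _ => hKc.preimage (by fun_prop)

lemma isBounded_inscribedEllipsoids (hKb : Bornology.IsBounded K) :
    Bornology.IsBounded (inscribedEllipsoids K) := by
  obtain ⟨r, hr⟩ := hKb.exists_norm_le
  refine isBounded_iff_forall_norm_le.2 ⟨2 * r, fun P hP => ?_⟩
  have hc : ‖P.2‖ ≤ r := by simpa using hr _ (hP 0 (by simp))
  have hr₀ : 0 ≤ r := (norm_nonneg _).trans hc
  refine max_le (ContinuousLinearMap.opNorm_le_of_unit_norm (by linarith) fun u hu => ?_)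
    (by linarith)
  have := norm_sub_le (P.2 + P.1 u) P.2
  rw [add_sub_cancel_left] at this
  linarith [hr _ (hP u hu.le)]

variable [FiniteDimensional ℝ V]

lemma mem_of_forall_exists_inner_le (hK : Convex ℝ K) (hKc : IsClosed K) {x : V}
    (hx : ∀ v, ∃ z ∈ K, ⟪v, x⟫ ≤ ⟪v, z⟫) : x ∈ K := by
  by_contra hxK
  obtain ⟨f, r, hf, hfx⟩ := geometric_hahn_banach_closed_point hK hKc hxK
  obtain ⟨v, rfl⟩ := (toDual ℝ V).surjective f
  obtain ⟨z, hz, hxz⟩ := hx v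
  exact ((hf z hz).trans hfx).not_ge hxz

lemma exists_mem_inscribedEllipsoids_det_ne_zero (hK : (interior K).Nonempty) :
    ∃ P ∈ inscribedEllipsoids K, P.1.det ≠ 0 := by
  obtain ⟨x, hx⟩ := hK
  obtain ⟨r, hr, hxr⟩ := nhds_basis_closedBall.mem_iff.1 (mem_interior_iff_mem_nhds.1 hx)
  refine ⟨(r • ContinuousLinearMap.id ℝ V, x), fun u hu => hxr ?_, ?_⟩
  · simpa [norm_smul, abs_of_pos hr] using mul_le_of_le_one_right hr.le hu
  · simp [ContinuousLinearMap.det, LinearMap.det_smul, hr.ne']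

lemma stretch_mem_inscribedEllipsoids (hK : Convex ℝ K) (hKc : IsClosed K)
    (hB : closedBall 0 1 ⊆ K) {e : V} (he : ‖e‖ = 1) {R : ℝ} (hR : 1 ≤ R) (hRe : R • e ∈ K) {δ : ℝ}
    (hδ₀ : 0 ≤ δ) (hδ₁ : δ ≤ 1) :
    (stretch (1 + δ * (R - 1) / 2) √(1 - δ) e, (δ * (R - 1) / 2) • e) ∈ inscribedEllipsoids K := by
  intro u hu
  refine mem_of_forall_exists_inner_le hK hKc fun v => ?_
  set t := δ * (R - 1) / 2
  set M := stretch (1 + t) √(1 - δ) e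
  have support_le : ⟪v, t • e + M u⟫ ≤ max ‖v‖ (R * ⟪e, v⟫) :=
    calc ⟪v, t • e + M u⟫ = t * ⟪e, v⟫ + ⟪M v, u⟫ := by
          rw [inner_add_right, real_inner_smul_right, real_inner_comm, inner_stretch_right]
      _ ≤ t * ⟪e, v⟫ + ‖M v‖ := by
          gcongr
          exact (real_inner_le_norm _ _).trans (mul_le_of_le_one_right (norm_nonneg _) hu)
      _ ≤ max ‖v‖ (R * ⟪e, v⟫) := by
          refine mul_add_le_max_of_sq_eq hR hδ₀ hδ₁ ?_ ?_
          · simpa [he] using abs_real_inner_le_norm e v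
          · rw [norm_stretch_sq _ _ he, Real.sq_sqrt (by linarith)]
  rcases le_max_iff.1 support_le with h | h
  · refine ⟨‖v‖⁻¹ • v, hB ?_, h.trans_eq ?_⟩
    · simpa [norm_smul] using inv_mul_le_one (a := ‖v‖)
    · rw [real_inner_smul_right, real_inner_self_eq_norm_mul_norm, ← mul_assoc,
        inv_mul_mul_self]
  · exact ⟨R • e, hRe, h.trans_eq (by rw [real_inner_smul_right, real_inner_comm])⟩

theorem exists_mem_inscribedEllipsoids_one_lt_abs_det (hK : Convex ℝ K) (hKc : IsClosed K)
    (hB : closedBall 0 1 ⊆ K) {q : V} (hq : q ∈ K) (hq' : finrank ℝ V < ‖q‖) :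
    ∃ P ∈ inscribedEllipsoids K, 1 < |P.1.det| := by
  have hq₀ : 0 < ‖q‖ := (Nat.cast_nonneg _).trans_lt hq'
  have : Nontrivial V := ⟨q, 0, norm_pos_iff.1 hq₀⟩
  obtain ⟨k, hk⟩ := Nat.exists_eq_succ_of_ne_zero (finrank_pos (R := ℝ) (M := V)).ne'
  have hkq : k + 1 < ‖q‖ := by rwa [hk, Nat.cast_succ] at hq'
  obtain ⟨δ, hδ₀, hδ₁, hdet⟩ := exists_one_lt_one_sub_pow_mul_sq hkq
  have he : ‖‖q‖⁻¹ • q‖ = 1 := by simp [norm_smul, hq₀.ne']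
  refine ⟨_, stretch_mem_inscribedEllipsoids hK hKc hB he (R := ‖q‖)
    (by linarith [k.cast_nonneg (α := ℝ)]) (by simpa [hq₀.ne'] using hq) hδ₀.le hδ₁.le, ?_⟩
  have hb : √(1 - δ) ≠ 0 := (Real.sqrt_pos.2 (by linarith)).ne'
  rw [det_stretch _ hb he, hk, ← one_lt_sq_iff_one_lt_abs]
  refine hdet.trans_eq ?_
  calc (1 - δ) ^ k * (1 + δ * (‖q‖ - 1) / 2) ^ 2
      = (√(1 - δ) ^ 2) ^ k * (1 + δ * (‖q‖ - 1) / 2) ^ 2 := by rw [Real.sq_sqrt (by linarith)]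
    _ = (√(1 - δ) ^ (k + 1) * ((1 + δ * (‖q‖ - 1) / 2) / √(1 - δ))) ^ 2 := by
        field_simp
        ring

theorem exists_john_ellipsoid (hK : Convex ℝ K) (hKc : IsCompact K) (hKi : (interior K).Nonempty) :
    ∃ (A : V ≃L[ℝ] V) (c : V), (∀ u, ‖u‖ ≤ 1 → c + A u ∈ K) ∧
      ∀ x ∈ K, ‖A.symm (x - c)‖ ≤ finrank ℝ V := by
  have : ProperSpace ((V →L[ℝ] V) × V) := FiniteDimensional.proper ℝ _
  obtain ⟨P, hP, hP_det⟩ := exists_mem_inscribedEllipsoids_det_ne_zero hKi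
  obtain ⟨⟨A₀, c⟩, hA₀, hmax⟩ := (isCompact_of_isClosed_isBounded
    (isClosed_inscribedEllipsoids hKc.isClosed) (isBounded_inscribedEllipsoids hKc.isBounded))
    |>.exists_isMaxOn ⟨P, hP⟩ (f := fun P => |P.1.det|)
    (ContinuousLinearMap.continuous_det.comp continuous_fst).abs.continuousOn
  have hA₀_det : 0 < |A₀.det| := (abs_pos.2 hP_det).trans_le (hmax hP)
  obtain ⟨A, rfl⟩ : ∃ A : V ≃L[ℝ] V, (A : V →L[ℝ] V) = A₀ :=
    ⟨A₀.toContinuousLinearEquivOfDetNeZero (abs_pos.1 hA₀_det), rfl⟩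
  refine ⟨A, c, hA₀, fun x hx => ?_⟩
  by_contra! hlt
  obtain ⟨⟨M, τ⟩, hM, hM_det⟩ := exists_mem_inscribedEllipsoids_one_lt_abs_det
    (K := (fun u => c + A u) ⁻¹' K)
    ((hK.translate_preimage_right c).linear_preimage (A : V →ₗ[ℝ] V))
    (hKc.isClosed.preimage (by fun_prop)) (fun u hu => hA₀ u (by simpa using hu))
    (q := A.symm (x - c)) (by simpa using hx) hlt
  have hAM : ((A : V →L[ℝ] V).comp M, c + A τ) ∈ inscribedEllipsoids K := fun u hu => by
    simpa [add_assoc] using hM u hu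
  have det_comp : ((A : V →L[ℝ] V).comp M).det = (A : V →L[ℝ] V).det * M.det :=
    LinearMap.det_comp _ _
  have := hmax hAM
  simp only [mem_ofPred_eq, det_comp, abs_mul] at this
  nlinarith

end John

section Flatness

open Module Metric Set
open scoped RealInnerProductSpace

lemma exists_surjective_eq_smul {R M : Type*} [CommRing R] [IsDomain R] [IsPrincipalIdealRing R]
    [AddCommGroup M] [Module R M] {f : M →ₗ[R] R} (hf : f ≠ 0) :
    ∃ (g : R) (φ : M →ₗ[R] R), g ≠ 0 ∧ Function.Surjective φ ∧ f = g • φ := by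
  obtain ⟨g, hg⟩ := (IsPrincipalIdealRing.principal (LinearMap.range f)).principal
  have hg₀ : g ≠ 0 := by
    rintro rfl
    exact hf (LinearMap.range_eq_bot.1 (by simpa using hg))
  let e : R ≃ₗ[R] LinearMap.range f :=
    (LinearEquiv.toSpanNonzeroSingleton R R g hg₀).trans (LinearEquiv.ofEq _ _ hg.symm)
  refine ⟨g, e.symm ∘ₗ f.rangeRestrict, hg₀,
    e.symm.surjective.comp f.surjective_rangeRestrict, ?_⟩
  ext x
  calc f x = e (e.symm (f.rangeRestrict x)) := by simp
    _ = g * e.symm (f.rangeRestrict x) := mul_comm _ _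

variable {ι : Type*} [Fintype ι]

lemma exists_surjective_abs_inner_latticePoint_le [DecidableEq ι] {y : ι → ℤ} (hy : y ≠ 0) :
    ∃ φ : (ι → ℤ) →ₗ[ℤ] ℤ, Function.Surjective φ ∧ ∀ v,
      |⟪latticePoint fun i => φ (Pi.single i 1), v⟫| ≤ |⟪latticePoint y, v⟫| := by
  have hf : Fintype.linearCombination ℤ y ≠ 0 := fun h => hy <| funext fun i => by
    simpa [Fintype.linearCombination_apply_single] using LinearMap.congr_fun h (Pi.single i 1)
  obtain ⟨g, φ, hg, hφ, hf_eq⟩ := exists_surjective_eq_smul hf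
  have y_eq : latticePoint y = (g : ℝ) • latticePoint fun i => φ (Pi.single i 1) := by
    ext i
    have := LinearMap.congr_fun hf_eq (Pi.single i 1)
    simp only [Fintype.linearCombination_apply_single, one_smul, LinearMap.smul_apply] at this
    simp [latticePoint, this]
  refine ⟨φ, hφ, fun v => ?_⟩
  rw [y_eq, real_inner_smul_left, abs_mul]
  exact le_mul_of_one_le_left (abs_nonneg _) (by exact_mod_cast Int.one_le_abs hg)

theorem exists_forall_abs_inner_latticePoint_sub_le (hι : 1 < Fintype.card ι)
    {K : Set (EuclideanSpace ℝ ι)} (hK : Convex ℝ K) (hKc : IsCompact K)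
    (hKi : (interior K).Nonempty) (hlat : {n : ι → ℤ | latticePoint n ∈ interior K}.Subsingleton) :
    ∃ y : ι → ℤ, y ≠ 0 ∧ ∀ x ∈ K, ∀ x' ∈ K,
      |⟪latticePoint y, x - x'⟫| ≤ Fintype.card ι * (Fintype.card ι + 1) := by
  set d : ℝ := (Fintype.card ι : ℝ)
  have hd : 2 ≤ d := Nat.ofNat_le_cast.2 hι
  have rayleigh_lt : (d + 2) * (d + 10) < 12 * Real.pi ^ 2 * ((d + 1) / 4) ^ 2 :=
    calc (d + 2) * (d + 10) < 12 * 3 ^ 2 * ((d + 1) / 4) ^ 2 := by nlinarith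
      _ ≤ 12 * Real.pi ^ 2 * ((d + 1) / 4) ^ 2 := by gcongr; exact Real.pi_gt_three.le
  obtain ⟨A, c, hA, hKA⟩ := exists_john_ellipsoid hK hKc hKi
  rw [finrank_euclideanSpace] at hKA
  have outside : ∀ n, latticePoint n ∉ interior K → 1 ≤ ‖A.symm (latticePoint n - c)‖ := by
    intro n hn
    contrapose! hn
    refine mem_interior.2 ⟨{x | ‖A.symm (x - c)‖ < 1}, fun x hx => ?_,
      isOpen_lt (by fun_prop) continuous_const, hn⟩
    simpa using hA _ (le_of_lt hx)
  obtain ⟨n₀, hn₀⟩ : ∃ n₀, ∀ n ≠ n₀, latticePoint n ∉ interior K := by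
    rcases hlat.eq_empty_or_singleton with h | ⟨n₀, h⟩
    · exact ⟨0, fun n _ => eq_empty_iff_forall_notMem.1 h n⟩
    · exact ⟨n₀, fun n hn hnK => hn (h.subset hnK)⟩
  obtain ⟨y, hy, hAy⟩ := exists_norm_adjointEquiv_latticePoint_le hι A c (ρ := (d + 1) / 4)
    (by positivity) rayleigh_lt fun n hn => outside n (hn₀ n hn)
  refine ⟨y, hy, fun x hx x' hx' => ?_⟩
  have norm_sub_le : ‖A.symm (x - x')‖ ≤ 2 * d := by
    have := norm_sub_le (A.symm (x - c)) (A.symm (x' - c))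
    rw [← map_sub, sub_sub_sub_cancel_right] at this
    linarith [hKA x hx, hKA x' hx']
  calc |⟪latticePoint y, x - x'⟫| = |⟪adjointEquiv A (latticePoint y), A.symm (x - x')⟫| := by
        rw [inner_adjointEquiv_left, A.apply_symm_apply]
    _ ≤ ‖adjointEquiv A (latticePoint y)‖ * ‖A.symm (x - x')‖ := abs_real_inner_le_norm _ _
    _ ≤ 2 * ((d + 1) / 4) * (2 * d) := by gcongr
    _ = d * (d + 1) := by ring

lemma extR_eq_inner {d : ℕ} (φ : (Fin d → ℤ) →ₗ[ℤ] ℤ) (x : Fin d → ℝ) :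
    extR φ x = ⟪latticePoint fun i => φ (Pi.single i 1), WithLp.toLp 2 x⟫ := by
  simp [extR, latticePoint, PiLp.inner_apply]

theorem exists_surjective_abs_extR_sub_le {d : ℕ} (hd : 2 ≤ d) {K : Set (Fin d → ℝ)}
    (hKc : IsCompact K) (hK : Convex ℝ K) (hKi : (interior K).Nonempty)
    (hlat : (range (intCast (d := d)) ∩ interior K).Subsingleton) :
    ∃ φ : (Fin d → ℤ) →ₗ[ℤ] ℤ, Function.Surjective φ ∧
      ∀ x ∈ K, ∀ x' ∈ K, |extR φ x - extR φ x'| ≤ d * (d + 1) := by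
  let e : EuclideanSpace ℝ (Fin d) ≃L[ℝ] (Fin d → ℝ) := EuclideanSpace.equiv (Fin d) ℝ
  have interior_preimage : interior (e ⁻¹' K) = e ⁻¹' interior K :=
    (e.toHomeomorph.preimage_interior K).symm
  obtain ⟨y, hy, hwidth⟩ := exists_forall_abs_inner_latticePoint_sub_le (K := e ⁻¹' K)
    (by simpa using Nat.lt_of_succ_le hd)
    (hK.linear_preimage (e : EuclideanSpace ℝ (Fin d) →ₗ[ℝ] (Fin d → ℝ)))
    (e.toHomeomorph.isCompact_preimage.2 hKc)
    (interior_preimage ▸ hKi.preimage e.surjective) fun n hn m hm => by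
      rw [interior_preimage] at hn hm
      have : intCast n = intCast m := hlat ⟨⟨n, rfl⟩, hn⟩ ⟨⟨m, rfl⟩, hm⟩
      exact funext fun i => by simpa [intCast] using congr_fun this i
  obtain ⟨φ, hφ, hφy⟩ := exists_surjective_abs_inner_latticePoint_le hy
  refine ⟨φ, hφ, fun x hx x' hx' => ?_⟩
  rw [extR_eq_inner, extR_eq_inner, ← inner_sub_right]
  exact (hφy _).trans (by
    simpa only [Fintype.card_fin] using hwidth (WithLp.toLp 2 x) hx (WithLp.toLp 2 x') hx')

lemma extR_smul {d : ℕ} (φ : (Fin d → ℤ) →ₗ[ℤ] ℤ) (r : ℝ) (x : Fin d → ℝ) :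
    extR φ (r • x) = r * extR φ x := by
  simp only [extR, Pi.smul_apply, smul_eq_mul, mul_assoc, Finset.mul_sum]

lemma sSup_sub_sInf_le_of_forall_abs_sub_le {s : Set ℝ} {C : ℝ} (hC : 0 ≤ C)
    (hs : ∀ a ∈ s, ∀ b ∈ s, |a - b| ≤ C) : sSup s - sInf s ≤ C := by
  rw [← Real.diam_eq (isBounded_iff.2 ⟨C, hs⟩)]
  exact diam_le_of_forall_dist_le hC hs

end Flatness

theorem stmt15_general {d : ℕ} (hd : 2 ≤ d) (ε : ℝ) (hε : 0 < ε)
    (U : Set (Fin d → ℝ)) (hUc : IsCompact U) (hUconv : Convex ℝ U)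
    (hUint : (interior U).Nonempty)
    (hlat : (Set.range (intCast (d := d)) ∩ interior (ε • U)).Subsingleton) :
    ∃ φ : (Fin d → ℤ) →ₗ[ℤ] ℤ, Function.Surjective φ ∧
      sSup (extR φ '' U) - sInf (extR φ '' U) ≤ (d * (d + 1) : ℝ) / ε := by
  obtain ⟨φ, hφ, hwidth⟩ := exists_surjective_abs_extR_sub_le hd (hUc.smul ε) (hUconv.smul ε)
    (by rw [interior_smul₀ hε.ne']; exact hUint.smul_set) hlat
  refine ⟨φ, hφ, sSup_sub_sInf_le_of_forall_abs_sub_le (by positivity) ?_⟩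
  rintro _ ⟨x, hx, rfl⟩ _ ⟨x', hx', rfl⟩
  have := hwidth _ (Set.smul_mem_smul_set hx) _ (Set.smul_mem_smul_set hx')
  rw [extR_smul, extR_smul, ← mul_sub, abs_mul, abs_of_pos hε] at this
  rwa [le_div_iff₀' hε]

theorem stmt15 {d : ℕ} (hd : 2 ≤ d) (ε : ℝ) (hε : 0 < ε)
    (U : Set (Fin d → ℝ)) (hUc : IsCompact U) (hUconv : Convex ℝ U)
    (hUint : (interior U).Nonempty)
    (hlat : Set.range (intCast (d := d)) ∩ interior (ε • U) = {0}) :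
    ∃ φ : (Fin d → ℤ) →ₗ[ℤ] ℤ, Function.Surjective φ ∧
      sSup (extR φ '' U) - sInf (extR φ '' U) ≤ (d * (d + 1) : ℝ) / ε :=
  stmt15_general hd ε hε U hUc hUconv hUint (hlat ▸ Set.subsingleton_singleton)
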